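/- arXiv:2109.14794 — 5 statements merged into one kernel-verified Lean document; each statement's English description precedes it below -/
import Mathlib

section
/- Let G be a simple graph on a vertex set V, let A and B be distinct vertices, and let Y and R be real numbers with Y > 0 and 0 < R < 1. Define a price function on vertices by price(B) = (1 - R/2)·Y and price(v) = Y for every vertex v not equal to A or B. Say a vertex v 'admits' the measurement transaction if (1 + R/2)·Y ≥ (1 + R)·price(v). Then: (i) B admits; (ii) no vertex outside {A, B} admits; and (iii) there exists a walk in G from A to B all of whose internal vertices admit if and only if A and B are adjacent in G. -/
/-!
Relative to `Y`, admission at price `Y` would need `1 + R / 2 ≥ 1 + R`, which fails for `R > 0`,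
whereas `(1 + R) * (1 - R / 2) = 1 + R / 2 - R ^ 2 / 2`, so `B` admits. For the walk claim only the
first step `A → c` matters: either the walk ends at `c = B`, or `c` is an internal vertex different
from `A`, and since it admits it must equal `B`. Later visits to `A` play no role, so `price A` may
be arbitrary.
-/

/-- **TopoShot's isolation property with explicit Gas prices.**
Let `G` be a simple graph, `A ≠ B` vertices, `Y > 0` and `0 < R < 1` reals.
The price function satisfies `price B = (1 - R/2)·Y` and `price v = Y` for every
vertex `v ∉ {A, B}`. A vertex `v` *admits* the measurement transaction iff
`(1 + R/2)·Y ≥ (1 + R)·price v`. Then (i) `B` admits; (ii) no vertex outside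
`{A, B}` admits; and (iii) there exists a walk in `G` from `A` to `B` all of whose
internal vertices admit iff `A` and `B` are adjacent in `G`. -/
theorem toposhot_isolation_prices {V : Type*} (G : SimpleGraph V) (A B : V) (hAB : A ≠ B)
    (Y R : ℝ) (hY : 0 < Y) (hR0 : 0 < R) (hR1 : R < 1)
    (price : V → ℝ)
    (hpB : price B = (1 - R / 2) * Y)
    (hp : ∀ v : V, v ≠ A → v ≠ B → price v = Y) :
    ((1 + R / 2) * Y ≥ (1 + R) * price B) ∧
    (∀ v : V, v ≠ A → v ≠ B → ¬ ((1 + R / 2) * Y ≥ (1 + R) * price v)) ∧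
    ((∃ w : G.Walk A B, ∀ v ∈ w.support.tail.dropLast,
        (1 + R / 2) * Y ≥ (1 + R) * price v) ↔ G.Adj A B) := by
  have hno : ∀ v : V, v ≠ A → v ≠ B → ¬ ((1 + R / 2) * Y ≥ (1 + R) * price v) := by
    intro v hvA hvB h
    rw [hp v hvA hvB] at h
    nlinarith [mul_pos hR0 hY]
  refine ⟨?_, hno, ?_, ?_⟩
  · -- The two sides differ by `R ^ 2 / 2 * Y`.
    rw [hpB]
    nlinarith [mul_pos (mul_pos hR0 hR0) hY]
  · rintro ⟨w, hw⟩
    cases w with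
    | nil => exact absurd rfl hAB
    | @cons _ c _ h p =>
      cases p with
      | nil => exact h
      | cons h' q =>
        -- The second vertex `c` is internal, hence admits, and `c ≠ A` since `G` has no loops.
        have hc := hw c (by
          simp [SimpleGraph.Walk.support_cons, List.dropLast_cons_of_ne_nil q.support_ne_nil])
        by_cases hcB : c = B
        · exact hcB ▸ h
        · exact absurd hc (hno c h.ne' hcB)
  · intro h
    exact ⟨h.toWalk, by simp⟩
end

section
/- Let τ be a type of transactions with decidable equality, f : τ → ℝ a price function, n a natural number (the block capacity), and Y₀ a real number. For finite sets B and S of transactions, say B is a greedy full block for S if B ⊆ S, B has cardinality n, and every transaction in S \ B has price at most the price of every transaction in B. Let B be a finite set all of whose elements have price strictly greater than Y₀, and let L be a finite set all of whose elements have price at most Y₀. Then for any finite set S, B is a greedy full block for S if and only if B is a greedy full block for S ∪ L. -/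
/-- `B` is a *greedy full block* for the mempool `S`: `B ⊆ S`, `B` has exactly `n`
transactions (the block is full), and every transaction left in the mempool has
price at most the price of every transaction included in the block. -/
def GreedyFullBlock {τ : Type*} [DecidableEq τ] (f : τ → ℝ) (n : ℕ)
    (B S : Finset τ) : Prop :=
  B ⊆ S ∧ B.card = n ∧ ∀ t ∈ S \ B, ∀ b ∈ B, f t ≤ f b

/-- **Core of TopoShot's non-interference proof.**
Let `B` be a finite set of transactions all priced strictly above `Y₀`, and `L` a
finite set of transactions all priced at most `Y₀`. Then for any finite set `S`,
`B` is a greedy full block for `S` iff `B` is a greedy full block for `S ∪ L`. -/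
theorem greedyFullBlock_union_low {τ : Type*} [DecidableEq τ]
    (f : τ → ℝ) (n : ℕ) (Y₀ : ℝ) (B L : Finset τ)
    (hB : ∀ b ∈ B, Y₀ < f b) (hL : ∀ l ∈ L, f l ≤ Y₀) (S : Finset τ) :
    GreedyFullBlock f n B S ↔ GreedyFullBlock f n B (S ∪ L) := by
  constructor
  · rintro ⟨hsub, hcard, hmax⟩
    refine ⟨hsub.trans Finset.subset_union_left, hcard, fun t ht b hb => ?_⟩
    obtain ⟨htSL, htB⟩ := Finset.mem_sdiff.1 ht
    rcases Finset.mem_union.1 htSL with htS | htL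
    · exact hmax t (Finset.mem_sdiff.2 ⟨htS, htB⟩) b hb
    · exact (hL t htL).trans (hB b hb).le
  · rintro ⟨hsub, hcard, hmax⟩
    refine ⟨fun b hb => ?_, hcard, fun t ht b hb => ?_⟩
    -- The price gap makes `B` and `L` disjoint, so `B ⊆ S ∪ L` forces `B ⊆ S`.
    · exact (Finset.mem_union.1 (hsub hb)).resolve_right
        fun hbL => (hB b hb).not_ge (hL b hbL)
    · exact hmax t (Finset.sdiff_subset_sdiff Finset.subset_union_left subset_rfl ht) b hb
end

section
/- Let τ be a type of transactions with decidable equality, f : τ → ℝ a price function, n a natural number (the block capacity), and Y₀ a real number. For finite sets B and S, say B is a greedy full block for S if B ⊆ S, B has cardinality n, and every transaction in S \ B has price at most the price of every transaction in B. Let S, B, A be sequences of finite sets of transactions indexed by ℕ (mempools, mined blocks, and arrivals) satisfying: for every i, B(i) is a greedy full block for S(i), every element of B(i) has price strictly greater than Y₀, and S(i+1) = (S(i) \ B(i)) ∪ A(i). Let L be a finite set all of whose elements have price at most Y₀, and define the hypothetical mempool sequence S' by S'(0) = S(0) ∪ L and S'(i+1) = (S'(i) \ B(i)) ∪ A(i).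 Then for every i, S'(i) = S(i) ∪ L and B(i) is a greedy full block for S'(i). -/
/-- **TopoShot's non-interference theorem (abstract form).**
Let `S`, `B`, `A` be sequences of mempools, mined blocks and arrivals with:
`B i` a greedy full block for `S i`, every element of `B i` priced strictly above
`Y₀`, and `S (i+1) = (S i \ B i) ∪ A i`. Let `L` be a finite set of transactions
all priced at most `Y₀`, and let the hypothetical mempool sequence `S'` satisfy
`S' 0 = S 0 ∪ L` and `S' (i+1) = (S' i \ B i) ∪ A i`. Then for every `i`,
`S' i = S i ∪ L` and `B i` is a greedy full block for `S' i`. -/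
theorem toposhot_noninterference {τ : Type*} [DecidableEq τ]
    (f : τ → ℝ) (n : ℕ) (Y₀ : ℝ)
    (S B A : ℕ → Finset τ)
    (hblock : ∀ i, GreedyFullBlock f n (B i) (S i))
    (hhigh : ∀ i, ∀ b ∈ B i, Y₀ < f b)
    (hstep : ∀ i, S (i + 1) = (S i \ B i) ∪ A i)
    (L : Finset τ) (hL : ∀ l ∈ L, f l ≤ Y₀)
    (S' : ℕ → Finset τ)
    (hS'0 : S' 0 = S 0 ∪ L)
    (hS'step : ∀ i, S' (i + 1) = (S' i \ B i) ∪ A i) :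
    ∀ i, S' i = S i ∪ L ∧ GreedyFullBlock f n (B i) (S' i) := by
  -- Blocks are priced above `Y₀` and `L` at most `Y₀`, so removing a block never touches `L`.
  have hdisj : ∀ i, Disjoint L (B i) := fun i =>
    Finset.disjoint_left.mpr fun t htL htB => (hL t htL).not_gt (hhigh i t htB)
  have hS' : ∀ i, S' i = S i ∪ L := by
    intro i
    induction i with
    | zero => exact hS'0
    | succ k ih =>
      rw [hS'step, hstep, ih, Finset.union_sdiff_distrib,
        Finset.sdiff_eq_self_of_disjoint (hdisj k), Finset.union_right_comm]
  intro i
  obtain ⟨hsub, hcard, hgreedy⟩ := hblock i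
  refine ⟨hS' i, ?_, hcard, ?_⟩
  · rw [hS' i]
    exact hsub.trans Finset.subset_union_left
  · intro t ht b hb
    rw [hS' i, Finset.mem_sdiff, Finset.mem_union] at ht
    obtain ⟨htS | htL, htB⟩ := ht
    · exact hgreedy t (Finset.mem_sdiff.mpr ⟨htS, htB⟩) b hb
    · exact (hL t htL).trans (hhigh i b hb).le
end

section
/- Let k be a natural number and let u, v be distinct elements of Fin (2^k). Then there exists a unique natural number j < k such that ⌊u / 2^(k - j)⌋ = ⌊v / 2^(k - j)⌋ and ⌊u / 2^(k - j - 1)⌋ ≠ ⌊v / 2^(k - j - 1)⌋. -/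
/-!
Lying in a common block of size `2 ^ m` is an upward closed condition on `m`
(`div_two_pow_eq_mono`), since blocks of size `2 ^ n` are unions of blocks of size `2 ^ m` for
`m ≤ n`. It fails at `m = 0` because `u ≠ v` and holds at `m = k` because there is then a single
block. Hence it switches from false to true exactly once, at its least witness `m`, and the round
separating `u` and `v` is `j = k - m`.
-/

theorem div_two_pow_eq_mono {a b m n : ℕ} (hmn : m ≤ n) (h : a / 2 ^ m = b / 2 ^ m) :
    a / 2 ^ n = b / 2 ^ n := by
  rw [← Nat.add_sub_cancel' hmn, pow_add, ← Nat.div_div_eq_div_mul, ← Nat.div_div_eq_div_mul, h]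

/-- **TopoShot's recursive-halving schedule separates each pair exactly once.**
Let `u ≠ v` be nodes in `Fin (2^k)`. Then there is a unique round `j < k` at which
`u` and `v` lie in the same block of size `2^(k-j)` (i.e. `⌊u / 2^(k-j)⌋ = ⌊v / 2^(k-j)⌋`)
but in different halves of that block (i.e. `⌊u / 2^(k-j-1)⌋ ≠ ⌊v / 2^(k-j-1)⌋`). -/
theorem toposhot_halving_schedule (k : ℕ) (u v : Fin (2 ^ k)) (huv : u ≠ v) :
    ∃! j : ℕ, j < k ∧
      (u : ℕ) / 2 ^ (k - j) = (v : ℕ) / 2 ^ (k - j) ∧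
      (u : ℕ) / 2 ^ (k - j - 1) ≠ (v : ℕ) / 2 ^ (k - j - 1) := by
  have hk : (u : ℕ) / 2 ^ k = (v : ℕ) / 2 ^ k := by
    rw [Nat.div_eq_of_lt u.isLt, Nat.div_eq_of_lt v.isLt]
  have hex : ∃ m, (u : ℕ) / 2 ^ m = (v : ℕ) / 2 ^ m := ⟨k, hk⟩
  obtain ⟨m, hm, hmin⟩ : ∃ m, (u : ℕ) / 2 ^ m = (v : ℕ) / 2 ^ m ∧
      ∀ n, (u : ℕ) / 2 ^ n = (v : ℕ) / 2 ^ n → m ≤ n :=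
    ⟨Nat.find hex, Nat.find_spec hex, fun _ hn => Nat.find_min' hex hn⟩
  have hmk : m ≤ k := hmin k hk
  have hm0 : 0 < m := by
    rcases Nat.eq_zero_or_pos m with rfl | h
    · exact absurd (Fin.ext (by simpa using hm)) huv
    · exact h
  refine ⟨k - m, ⟨by omega, ?_, ?_⟩, ?_⟩
  · rwa [Nat.sub_sub_self hmk]
  · intro h
    have := hmin _ h
    omega
  · rintro j ⟨hj, heq, hne⟩
    have hle : m ≤ k - j := hmin _ heq
    have hlt : k - j - 1 < m := by
      by_contra! h
      exact hne (div_two_pow_eq_mono h hm)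
    omega
end

section
/- Let m ≥ 1 and k ≥ 0 be natural numbers and N = m·2^k. For a node x in Fin N, let g(x) = ⌊x / 2^k⌋ be its group index and r(x) = x mod 2^k its position within its group. Define m + k sets of unordered pairs of distinct nodes: for each i < m, the set E_i of pairs {u, v} with g(u) ≠ g(v) and min(g(u), g(v)) = i; and for each j < k, the set F_j of pairs {u, v} with g(u) = g(v), ⌊r(u) / 2^(k - j)⌋ = ⌊r(v) / 2^(k - j)⌋, and ⌊r(u) / 2^(k - j - 1)⌋ ≠ ⌊r(v) / 2^(k - j - 1)⌋. Then the sets E_0, ..., E_{m-1}, F_0, ..., F_{k-1} are pairwise disjoint and their union is the set of all unordered pairs of distinct nodes of Fin N; in particular, the schedule measures all N(N-1)/2 possible links in N/2^k + k iterations. -/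
/-!
A pair in different groups is measured exactly in the first-round iteration indexed by the smaller
group index. For a pair `a ≠ b` of positions in one group, the relation "same block of size `2 ^ t`"
is monotone in `t` (`div_two_pow_eq_of_le`), fails at `t = 0` and holds at `t = k`; hence there is
exactly one threshold `t = k - j` at which it holds while failing at `t - 1`
(`existsUnique_halving_round`), and `j` is the only second-round iteration measuring the pair.
-/

/-- Dyadic blocks are nested: sharing a block of size `2 ^ s` implies sharing all larger ones. -/
theorem div_two_pow_eq_of_le {a b s t : ℕ} (hst : s ≤ t) (h : a / 2 ^ s = b / 2 ^ s) :
    a / 2 ^ t = b / 2 ^ t := by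
  obtain ⟨d, rfl⟩ := Nat.exists_eq_add_of_le hst
  rw [pow_add, ← Nat.div_div_eq_div_mul, ← Nat.div_div_eq_div_mul, h]

/-- Recursive halving separates two distinct positions of a group in exactly one round. -/
theorem existsUnique_halving_round {a b k : ℕ} (ha : a < 2 ^ k) (hb : b < 2 ^ k) (hab : a ≠ b) :
    ∃! j : Fin k, a / 2 ^ (k - (j : ℕ)) = b / 2 ^ (k - (j : ℕ)) ∧
      a / 2 ^ (k - (j : ℕ) - 1) ≠ b / 2 ^ (k - (j : ℕ) - 1) := by
  have hk : a / 2 ^ k = b / 2 ^ k := by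
    rw [Nat.div_eq_of_lt ha, Nat.div_eq_of_lt hb]
  have hex : ∃ t, a / 2 ^ t = b / 2 ^ t := ⟨k, hk⟩
  -- `t` is the exponent of the smallest block size at which `a` and `b` share a block.
  obtain ⟨t, ht, hmin⟩ : ∃ t, a / 2 ^ t = b / 2 ^ t ∧ ∀ s < t, a / 2 ^ s ≠ b / 2 ^ s :=
    ⟨Nat.find hex, Nat.find_spec hex, fun s hs => Nat.find_min hex hs⟩
  have htk : t ≤ k := by
    by_contra hlt
    exact hmin k (by omega) hk
  have ht0 : t ≠ 0 := by
    rintro rfl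
    exact hab (by simpa using ht)
  refine ⟨⟨k - t, by omega⟩, ?_, ?_⟩
  · have h : k - (k - t) = t := by omega
    simp only [h]
    exact ⟨ht, hmin _ (by omega)⟩
  · rintro ⟨j, hj⟩ ⟨h1, h2⟩
    simp only at h1 h2
    have hle : t ≤ k - j := by
      by_contra hlt
      exact hmin _ (by omega) h1
    have hge : k - j ≤ t := by
      by_contra hlt
      exact h2 (div_two_pow_eq_of_le (by omega) ht)
    ext
    simp only
    omega

/-- **TopoShot's full parallel schedule partitions all links.**
Let `m ≥ 1`, `k ≥ 0` and `N = m·2^k`. Node `x : Fin N` has group index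
`g x = ⌊x / 2^k⌋` and in-group position `r x = x % 2^k`. The schedule runs
`m + k` iterations: first-round iteration `i < m` measures the unordered pairs
`{u, v}` with `g u ≠ g v` and `min (g u) (g v) = i`; second-round iteration `j < k`
measures the pairs with `g u = g v` lying in the same block of size `2^(k-j)` of
their group (`⌊r u / 2^(k-j)⌋ = ⌊r v / 2^(k-j)⌋`) but in different halves
(`⌊r u / 2^(k-j-1)⌋ ≠ ⌊r v / 2^(k-j-1)⌋`). These `m + k` sets of pairs are pairwise
disjoint and together cover all unordered pairs of distinct nodes — i.e. every pair
of distinct nodes is measured in exactly one of the iterations — and the number of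
iterations is `N / 2^k + k`. -/
theorem toposhot_full_schedule (m k N : ℕ) (hm : 1 ≤ m) (hN : N = m * 2 ^ k) :
    (∀ u v : Fin N, u ≠ v →
      ∃! c : Fin m ⊕ Fin k,
        Sum.elim
          (fun i : Fin m =>
            (u : ℕ) / 2 ^ k ≠ (v : ℕ) / 2 ^ k ∧
            min ((u : ℕ) / 2 ^ k) ((v : ℕ) / 2 ^ k) = (i : ℕ))
          (fun j : Fin k =>
            (u : ℕ) / 2 ^ k = (v : ℕ) / 2 ^ k ∧
            ((u : ℕ) % 2 ^ k) / 2 ^ (k - (j : ℕ)) = ((v : ℕ) % 2 ^ k) / 2 ^ (k - (j : ℕ)) ∧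
            ((u : ℕ) % 2 ^ k) / 2 ^ (k - (j : ℕ) - 1) ≠ ((v : ℕ) % 2 ^ k) / 2 ^ (k - (j : ℕ) - 1))
          c) ∧
    Fintype.card (Fin m ⊕ Fin k) = N / 2 ^ k + k := by
  have hpos : 0 < 2 ^ k := by positivity
  refine ⟨fun u v huv => ?_, ?_⟩
  · by_cases hg : (u : ℕ) / 2 ^ k = (v : ℕ) / 2 ^ k
    · have hr : (u : ℕ) % 2 ^ k ≠ (v : ℕ) % 2 ^ k := by
        intro hr
        apply huv
        ext
        rw [← Nat.div_add_mod (u : ℕ) (2 ^ k), ← Nat.div_add_mod (v : ℕ) (2 ^ k), hg, hr]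
      obtain ⟨j, hj, huniq⟩ :=
        existsUnique_halving_round (Nat.mod_lt (u : ℕ) hpos) (Nat.mod_lt (v : ℕ) hpos) hr
      refine ⟨Sum.inr j, ⟨hg, hj⟩, ?_⟩
      rintro (i | j') h
      · exact absurd hg h.1
      · exact congrArg Sum.inr (huniq j' h.2)
    · have hu : (u : ℕ) / 2 ^ k < m := Nat.div_lt_of_lt_mul (by
        rw [mul_comm, ← hN]; exact u.isLt)
      refine ⟨Sum.inl ⟨min ((u : ℕ) / 2 ^ k) ((v : ℕ) / 2 ^ k), lt_of_le_of_lt (min_le_left _ _) hu⟩,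
        ⟨hg, rfl⟩, ?_⟩
      rintro (i | j) h
      · exact congrArg Sum.inl (Fin.ext h.2.symm)
      · exact absurd h.1 hg
  · rw [hN, Nat.mul_div_cancel _ hpos]
    simp
end
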